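/- Let A(Γ) be the Artin group of rank 2 with presentation ⟨α, β | w(α,β:m) = w(β,α:m)⟩ where m ≥ 3 is odd and w(α,β:m) denotes the alternating word αβα… of length m. Then the outer automorphism group Out(A) is cyclic of order 2, generated by the class of the automorphism ε which sends α ↦ α⁻¹ and β ↦ β⁻¹. -/

import Mathlib

/-- The alternating word `x y x y ⋯` of length `m`. -/
def altWord : ℕ → FreeGroup (Fin 2) → FreeGroup (Fin 2) → FreeGroup (Fin 2)
  | 0, _, _ => 1
  | n + 1, x, y => x * altWord n y x

/-- Relator for the rank-2 Artin group `⟨α, β | w(α,β:m) = w(β,α:m)⟩`,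
with `α = of 0`, `β = of 1`. -/
def dihedralArtinRel (m : ℕ) : Set (FreeGroup (Fin 2)) :=
  {altWord m (FreeGroup.of 0) (FreeGroup.of 1) *
    (altWord m (FreeGroup.of 1) (FreeGroup.of 0))⁻¹}

/-!
With `m = 2k + 1`, the elements `x = (αβ)^k α` and `y = αβ` exhibit the Artin group as the torus
knot group `⟨x, y | x² = y^m⟩`. Its centre is generated by `z = x²`, because modulo `z` it becomes
the free product `ℤ/2 * ℤ/m`, whose centre is trivial. An automorphism `φ` therefore sends `z` to
`z^e` with `e = ±1`. In the free product every torsion element is conjugate into a factor; as `m`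
is odd, the image of `φ x` is conjugate to a power of `x`, and comparing with `φ z = z^e` shows
that `φ x` is conjugate to `x^e`. So, up to inner automorphisms and `ε`, `φ` fixes `x` and hence
`z`, and the same argument gives `φ y = d y d⁻¹`. A normal form argument in the free product shows
that such an endomorphism is surjective only if `d = x^s y^t`, and then `φ` is conjugation by
`x^s`. Finally, `ε` is not inner because it acts as `-1` on the abelianization.
-/

section FreeProduct

open Monoid Monoid.CoprodI

section Monoid

variable {ι : Type*} {M : ι → Type*} [∀ i, Monoid (M i)] {i j k l : ι}

theorem neWord_toList_eq_of_prod_eq {v : NeWord M i j} {w : NeWord M k l}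
    (h : v.prod = w.prod) : v.toList = w.toList := by
  classical exact congrArg Word.toList ((Word.equiv (M := M)).symm.injective h)

theorem neWord_fst_eq_of_prod_eq {v : NeWord M i j} {w : NeWord M k l}
    (h : v.prod = w.prod) : i = k := by
  have h_head : (some ⟨i, v.head⟩ : Option (Σ i, M i)) = some ⟨k, w.head⟩ := by
    rw [← v.toList_head?, ← w.toList_head?, neWord_toList_eq_of_prod_eq h]
  exact congrArg Sigma.fst (Option.some.inj h_head)

theorem neWord_prod_ne_one (w : NeWord M i j) : w.prod ≠ 1 := by
  classical
  intro h
  have h_word : w.toWord = Word.empty :=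
    (Word.equiv (M := M)).symm.injective (h.trans Word.prod_empty.symm)
  exact w.toList_ne_nil (congrArg Word.toList h_word)

theorem exists_neWord_prod_eq {g : CoprodI M} (hg : g ≠ 1) :
    ∃ (i j : ι) (w : NeWord M i j), w.prod = g := by
  classical
  obtain ⟨w, rfl⟩ := (Word.equiv (M := M)).symm.surjective g
  obtain ⟨i, j, w, rfl⟩ := NeWord.of_word w (by rintro rfl; exact hg Word.prod_empty)
  exact ⟨i, j, w, rfl⟩

theorem neWord_toList_length_pos (w : NeWord M i j) : 0 < w.toList.length :=
  List.length_pos_of_ne_nil w.toList_ne_nil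

theorem neWord_uncons (w : NeWord M i j) :
    (∃ a : M i, i = j ∧ w.prod = of a ∧ w.toList.length = 1) ∨
    ∃ (a : M i) (k : ι) (w' : NeWord M k j), i ≠ k ∧ w.prod = of a * w'.prod ∧
      w.toList.length = w'.toList.length + 1 := by
  induction w with
  | singleton a ha => exact .inl ⟨a, rfl, NeWord.prod_singleton a ha, rfl⟩
  | append w₁ hne w₂ ih₁ _ =>
    refine .inr ?_
    obtain ⟨a, rfl, h_prod, h_len⟩ | ⟨a, k, w', hk, h_prod, h_len⟩ := ih₁
    · exact ⟨a, _, w₂, hne, by rw [NeWord.append_prod, h_prod], by simp [h_len, add_comm]⟩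
    · exact ⟨a, k, .append w' hne w₂, hk, by simp [h_prod, mul_assoc], by simp [h_len]; omega⟩

theorem neWord_unsnoc (w : NeWord M i j) :
    (∃ a : M j, i = j ∧ w.prod = of a ∧ w.toList.length = 1) ∨
    ∃ (a : M j) (k : ι) (w' : NeWord M i k), k ≠ j ∧ w.prod = w'.prod * of a ∧
      w.toList.length = w'.toList.length + 1 := by
  induction w with
  | singleton a ha => exact .inl ⟨a, rfl, NeWord.prod_singleton a ha, rfl⟩
  | append w₁ hne w₂ _ ih₂ =>
    refine .inr ?_
    obtain ⟨a, rfl, h_prod, h_len⟩ | ⟨a, k, w', hk, h_prod, h_len⟩ := ih₂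
    · exact ⟨a, _, w₁, hne, by rw [NeWord.append_prod, h_prod], by simp [h_len]⟩
    · exact ⟨a, k, .append w₁ hne w', hk, by simp [h_prod, mul_assoc],
        by simp [h_len, add_assoc]⟩

theorem exists_neWord_prod_eq_pow_succ (w : NeWord M i j) (hij : i ≠ j) (n : ℕ) :
    ∃ w' : NeWord M i j, w'.prod = w.prod ^ (n + 1) := by
  induction n with
  | zero => exact ⟨w, by simp⟩
  | succ n ih =>
    obtain ⟨w', hw'⟩ := ih
    exact ⟨.append w' hij.symm w, by rw [NeWord.append_prod, hw', ← pow_succ]⟩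

theorem not_isOfFinOrder_neWord_prod (w : NeWord M i j) (hij : i ≠ j) :
    ¬ IsOfFinOrder w.prod := by
  rw [isOfFinOrder_iff_pow_eq_one]
  rintro ⟨n, hn, h_pow⟩
  obtain ⟨w', hw'⟩ := exists_neWord_prod_eq_pow_succ w hij (n - 1)
  rw [Nat.sub_add_cancel hn, h_pow] at hw'
  exact neWord_prod_ne_one w' hw'

/-- Stated with a lower bound `L i` on the lengths of the images of the letters of `M i`, so that
the induction records how much a word grows through its first letter alone. -/
theorem exists_neWord_prod_eq_map {f : CoprodI M →* CoprodI M} {L : ι → ℕ}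
    (hf : ∀ (i : ι) (h : M i), h ≠ 1 →
      ∃ w : NeWord M i i, w.prod = f (of h) ∧ L i ≤ w.toList.length)
    (v : NeWord M i j) : ∃ w : NeWord M i j, w.prod = f v.prod ∧ L i ≤ w.toList.length := by
  induction v with
  | singleton h hh => rw [NeWord.prod_singleton]; exact hf _ h hh
  | append v₁ hne v₂ ih₁ ih₂ =>
    obtain ⟨w₁, h₁, h_len⟩ := ih₁
    obtain ⟨w₂, h₂, -⟩ := ih₂
    refine ⟨.append w₁ hne w₂, by simp [h₁, h₂], ?_⟩
    rw [NeWord.toList, List.length_append]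
    exact h_len.trans (Nat.le_add_right _ _)

theorem not_surjective_of_neWord_map {f : CoprodI M →* CoprodI M} {L : ι → ℕ}
    (hf : ∀ (i : ι) (h : M i), h ≠ 1 →
      ∃ w : NeWord M i i, w.prod = f (of h) ∧ L i ≤ w.toList.length)
    [Nontrivial (M i)] (hL : 1 < L i) : ¬ Function.Surjective f := by
  intro hsurj
  obtain ⟨q, hq⟩ := exists_ne (1 : M i)
  obtain ⟨u, hu⟩ := hsurj (of q)
  have hu_ne : u ≠ 1 := by
    rintro rfl
    exact neWord_prod_ne_one (.singleton q hq) (by rw [NeWord.prod_singleton, ← hu, map_one])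
  obtain ⟨k, l, v, rfl⟩ := exists_neWord_prod_eq hu_ne
  obtain ⟨w, hw, h_len⟩ := exists_neWord_prod_eq_map hf v
  have hwq : w.prod = (NeWord.singleton q hq).prod := by rw [hw, hu, NeWord.prod_singleton]
  obtain rfl : k = i := neWord_fst_eq_of_prod_eq hwq
  rw [neWord_toList_eq_of_prod_eq hwq] at h_len
  exact absurd h_len (not_le.mpr hL)

section Bool

variable {M : Bool → Type*} [∀ i, Monoid (M i)]

theorem neWord_true_prod_eq_mul_of {j : Bool} (w : NeWord M true j) :
    ∃ b : M true, w.prod = of b ∨ ∃ w' : NeWord M true false, w.prod = w'.prod * of b := by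
  cases j with
  | false => exact ⟨1, .inr ⟨w, by simp⟩⟩
  | true =>
    obtain ⟨b, -, h_prod, -⟩ | ⟨b, k, w', hk, h_prod, -⟩ := neWord_unsnoc w
    · exact ⟨b, .inl h_prod⟩
    · obtain rfl := Bool.eq_false_iff.mpr hk
      exact ⟨b, .inr ⟨w', h_prod⟩⟩

theorem eq_of_mul_of_or_eq_of_mul_prod_mul_of (g : CoprodI M) :
    ∃ (a : M false) (b : M true), g = of a * of b ∨
      ∃ w : NeWord M true false, g = of a * w.prod * of b := by
  by_cases hg : g = 1
  · exact ⟨1, 1, .inl (by simp [hg])⟩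
  obtain ⟨i, j, w, rfl⟩ := exists_neWord_prod_eq hg
  suffices h_left : (∃ a : M false, w.prod = of a) ∨
      ∃ (a : M false) (w' : NeWord M true j), w.prod = of a * w'.prod by
    obtain ⟨a, ha⟩ | ⟨a, w', ha⟩ := h_left
    · exact ⟨a, 1, .inl (by rw [ha, map_one, mul_one])⟩
    obtain ⟨b, hb | ⟨w'', hb⟩⟩ := neWord_true_prod_eq_mul_of w'
    · exact ⟨a, b, .inl (by rw [ha, hb])⟩
    · exact ⟨a, b, .inr ⟨w'', by rw [ha, hb, mul_assoc]⟩⟩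
  cases i with
  | true => exact .inr ⟨1, w, by rw [map_one, one_mul]⟩
  | false =>
    obtain ⟨a, -, h_prod, -⟩ | ⟨a, k, w', hk, h_prod, -⟩ := neWord_uncons w
    · exact .inl ⟨a, h_prod⟩
    · obtain rfl := Bool.eq_true_of_not_eq_false hk.symm
      exact .inr ⟨a, w', h_prod⟩

end Bool

end Monoid

section Group

variable {ι : Type*} {G : ι → Type*} [∀ i, Group (G i)] {i j k : ι}

theorem exists_isConj_neWord_prod_lt (w : NeWord G i i) :
    (∃ h : G i, w.prod = of h) ∨
    ∃ (k l : ι) (w' : NeWord G k l), IsConj w.prod w'.prod ∧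
      w'.toList.length < w.toList.length := by
  obtain ⟨a, -, h_prod, -⟩ | ⟨a, k, w₁, hk, h_prod, h_len⟩ := neWord_uncons w
  · exact .inl ⟨a, h_prod⟩
  obtain ⟨-, rfl, -⟩ | ⟨b, l, w₂, hl, h_prod₁, h_len₁⟩ := neWord_unsnoc w₁
  · exact absurd rfl hk
  refine .inr ?_
  have h_conj : IsConj w.prod (w₂.prod * of (b * a)) :=
    isConj_iff.mpr ⟨(of a)⁻¹, by rw [h_prod, h_prod₁, map_mul]; group⟩
  by_cases hba : b * a = 1
  · rw [hba, map_one, mul_one] at h_conj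
    exact ⟨k, l, w₂, h_conj, by omega⟩
  · refine ⟨k, i, .append w₂ hl (.singleton (b * a) hba), ?_, ?_⟩
    · rwa [NeWord.append_prod, NeWord.prod_singleton]
    · simp only [NeWord.toList, List.length_append, List.length_singleton]
      omega

theorem exists_isConj_of_of_isOfFinOrder_neWord_prod (w : NeWord G i j)
    (hw : IsOfFinOrder w.prod) : ∃ (k : ι) (h : G k), IsConj (of h) w.prod := by
  induction hN : w.toList.length using Nat.strong_induction_on generalizing i j with
  | _ N ih =>
    obtain rfl : i = j := by
      by_contra hij
      exact not_isOfFinOrder_neWord_prod w hij hw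
    obtain ⟨h, h_prod⟩ | ⟨k, l, w', h_conj, h_lt⟩ := exists_isConj_neWord_prod_lt w
    · exact ⟨i, h, h_prod ▸ .refl _⟩
    · obtain ⟨k', h, hh⟩ := ih _ (hN ▸ h_lt) w' (h_conj.isOfFinOrder hw) rfl
      exact ⟨k', h, hh.trans h_conj.symm⟩

theorem exists_isConj_of_of_isOfFinOrder [Nonempty ι] {g : CoprodI G} (hg : IsOfFinOrder g) :
    ∃ (i : ι) (h : G i), IsConj (of h) g := by
  by_cases hg_one : g = 1
  · exact ⟨Classical.arbitrary ι, 1, by rw [map_one, hg_one]⟩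
  obtain ⟨i, j, w, rfl⟩ := exists_neWord_prod_eq hg_one
  exact exists_isConj_of_of_isOfFinOrder_neWord_prod w hg

theorem exists_neWord_prod_eq_conj (w : NeWord G i j) (hjk : j ≠ k) {h : G k} (hh : h ≠ 1) :
    ∃ w' : NeWord G i i, w'.prod = w.prod * of h * w.prod⁻¹ ∧ 1 < w'.toList.length := by
  refine ⟨.append (.append w hjk (.singleton h hh)) hjk.symm w.inv, by simp, ?_⟩
  have := neWord_toList_length_pos w
  simp only [NeWord.toList, List.length_append, List.length_singleton]
  omega

theorem center_coprodI_eq_bot [Nontrivial ι] [∀ i, Nontrivial (G i)] :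
    Subgroup.center (CoprodI G) = ⊥ := by
  rw [Subgroup.eq_bot_iff_forall]
  intro g hg
  by_contra hg_one
  obtain ⟨i, j, w, rfl⟩ := exists_neWord_prod_eq hg_one
  obtain ⟨k, hkj⟩ := exists_ne j
  obtain ⟨h, hh⟩ := exists_ne (1 : G k)
  obtain ⟨w', hw', h_len⟩ := exists_neWord_prod_eq_conj w hkj.symm hh
  rw [← Subgroup.mem_center_iff.mp hg, mul_inv_cancel_right,
    ← NeWord.prod_singleton h hh] at hw'
  rw [neWord_toList_eq_of_prod_eq hw'] at h_len
  exact absurd h_len (lt_irrefl 1)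

theorem exists_eq_of_mul_of_of_surjective {G : Bool → Type*} [∀ i, Group (G i)]
    [Nontrivial (G true)] {f : CoprodI G →* CoprodI G} (hf : Function.Surjective f)
    {c : CoprodI G} (hf_false : ∀ h : G false, f (of h) = of h)
    (hf_true : ∀ h : G true, f (of h) = c * of h * c⁻¹) :
    ∃ (a : G false) (b : G true), c = of a * of b := by
  obtain ⟨a, b, hc | ⟨w, rfl⟩⟩ := eq_of_mul_of_or_eq_of_mul_prod_mul_of c
  · exact ⟨a, b, hc⟩
  exfalso
  have hf' : Function.Surjective ((MulAut.conj (of a)⁻¹).toMonoidHom.comp f) :=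
    (MulAut.conj (of a)⁻¹).surjective.comp hf
  refine not_surjective_of_neWord_map (i := true) (L := fun i => cond i 2 1) ?_
    Nat.one_lt_two hf'
  rintro (_ | _) h hh
  · have h_ne : a⁻¹ * h * a ≠ 1 := by simpa [mul_assoc, inv_mul_eq_one, eq_comm] using hh
    exact ⟨.singleton _ h_ne, by simp [hf_false], le_rfl⟩
  · have h_ne : b * h * b⁻¹ ≠ 1 := by simpa using hh
    obtain ⟨w', hw', h_len⟩ := exists_neWord_prod_eq_conj w Bool.false_ne_true h_ne
    exact ⟨w', by simp [hw', hf_true, mul_assoc], h_len⟩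

end Group

end FreeProduct

section CyclicGroup

theorem zpow_ofAdd_one_surjective (n : ℕ) :
    Function.Surjective fun k : ℤ => Multiplicative.ofAdd (1 : ZMod n) ^ k := by
  intro h
  obtain ⟨k, hk⟩ := ZMod.intCast_surjective h.toAdd
  exact ⟨k, by simp [← ofAdd_zsmul, hk]⟩

theorem multiplicative_zmod_pow_eq_one {n : ℕ} (h : Multiplicative (ZMod n)) : h ^ n = 1 :=
  Multiplicative.toAdd.injective (by simp)

theorem exists_monoidHom_multiplicative_zmod {G : Type*} [Group G] {n : ℕ} {g : G}
    (hg : g ^ n = 1) :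
    ∃ f : Multiplicative (ZMod n) →* G, f (Multiplicative.ofAdd 1) = g := by
  have h_zero : zmultiplesHom (Additive G) (Additive.ofMul g) (n : ℤ) = 0 := by
    simp [← ofMul_pow, hg]
  have h_one := ZMod.lift_coe n ⟨_, h_zero⟩ 1
  rw [Int.cast_one] at h_one
  exact ⟨(ZMod.lift n ⟨_, h_zero⟩).toMultiplicativeLeft, by simp [h_one]⟩

end CyclicGroup

/-- The amalgam of infinite cyclic groups `⟨x i⟩` along `x i ^ n i = x j ^ n j`. For two coprime
exponents this is the group of a torus knot. -/
abbrev CyclicAmalgam {ι : Type*} (n : ι → ℕ) : Type _ :=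
  PresentedGroup (Set.range fun p : ι × ι =>
    FreeGroup.of p.1 ^ n p.1 * (FreeGroup.of p.2 ^ n p.2)⁻¹)

namespace CyclicAmalgam

open Monoid

variable {ι : Type*} {n : ι → ℕ} {i j : ι}

/-- The generator `x i` of the `i`-th cyclic factor. -/
def gen (n : ι → ℕ) (i : ι) : CyclicAmalgam n :=
  PresentedGroup.of i

theorem gen_pow_eq_gen_pow (i j : ι) : gen n i ^ n i = gen n j ^ n j :=
  PresentedGroup.mk_eq_mk_of_mul_inv_mem (x := FreeGroup.of i ^ n i)
    (y := FreeGroup.of j ^ n j) ⟨(i, j), rfl⟩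

theorem closure_range_gen : Subgroup.closure (Set.range (gen n)) = ⊤ :=
  PresentedGroup.closure_range_of _

theorem hom_ext {M : Type*} [Monoid M] {f g : CyclicAmalgam n →* M}
    (h : ∀ i, f (gen n i) = g (gen n i)) : f = g :=
  MonoidHom.eq_of_eqOn_dense closure_range_gen (by rintro _ ⟨i, rfl⟩; exact h i)

section Lift

variable {H : Type*} [Group H]

/-- The homomorphism given by the universal property of the amalgam. -/
def lift (f : ι → H) (hf : ∀ i j, f i ^ n i = f j ^ n j) : CyclicAmalgam n →* H :=
  PresentedGroup.toGroup (f := f) (by rintro _ ⟨p, rfl⟩; simp [hf p.1 p.2])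

@[simp]
theorem lift_gen (f : ι → H) (hf : ∀ i j, f i ^ n i = f j ^ n j) (i : ι) :
    lift f hf (gen n i) = f i :=
  PresentedGroup.toGroup.of _

end Lift

theorem gen_pow_mem_center (i : ι) : gen n i ^ n i ∈ Subgroup.center (CyclicAmalgam n) := by
  rw [← Subgroup.centralizer_univ, ← Subgroup.coe_top, ← closure_range_gen,
    Subgroup.centralizer_closure, Subgroup.mem_centralizer_iff]
  rintro _ ⟨j, rfl⟩
  rw [gen_pow_eq_gen_pow i j]
  exact (pow_mul_comm' _ _).symm

theorem not_isOfFinOrder_gen_pow (hn : ∀ i, n i ≠ 0) (i : ι) :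
    ¬ IsOfFinOrder (gen n i ^ n i) := by
  have h_one : ∀ j, Multiplicative.ofAdd ((n j : ℚ)⁻¹) ^ n j = Multiplicative.ofAdd 1 := fun j => by
    simp [← ofAdd_nsmul, hn j]
  intro h
  have h_deg := MonoidHom.isOfFinOrder (lift _ fun i j => (h_one i).trans (h_one j).symm) h
  rw [map_pow, lift_gen, h_one] at h_deg
  exact not_isOfFinOrder_of_isMulTorsionFree (by simp) h_deg

theorem gen_pow_zpow_injective (hn : ∀ i, n i ≠ 0) (i : ι) :
    Function.Injective fun k : ℤ => (gen n i ^ n i) ^ k :=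
  injective_zpow_iff_not_isOfFinOrder.mpr (not_isOfFinOrder_gen_pow hn i)

/-- The finite cyclic group into which `⟨x i⟩` projects when `x i ^ n i` is killed. -/
abbrev Factor (n : ι → ℕ) (i : ι) : Type :=
  Multiplicative (ZMod (n i))

/-- The quotient of the amalgam by the common power `x i ^ n i`. -/
def toCoprod (n : ι → ℕ) : CyclicAmalgam n →* CoprodI (Factor n) :=
  lift (fun i => CoprodI.of (i := i) (Multiplicative.ofAdd 1)) fun i j => by
    simp only [← map_pow, multiplicative_zmod_pow_eq_one, map_one]

theorem toCoprod_gen (i : ι) :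
    toCoprod n (gen n i) = CoprodI.of (M := Factor n) (i := i) (Multiplicative.ofAdd 1) :=
  lift_gen _ _ i

theorem exists_toCoprod_gen_zpow_eq (h : Factor n i) :
    ∃ k : ℤ, toCoprod n (gen n i ^ k) = CoprodI.of h := by
  obtain ⟨k, rfl⟩ := zpow_ofAdd_one_surjective (n i) h
  exact ⟨k, by rw [map_zpow, toCoprod_gen, map_zpow]⟩

theorem toCoprod_surjective : Function.Surjective (toCoprod n) := by
  intro g
  induction g using CoprodI.induction_on with
  | one => exact ⟨1, map_one _⟩
  | of i h =>
    obtain ⟨k, hk⟩ := exists_toCoprod_gen_zpow_eq h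
    exact ⟨_, hk⟩
  | mul g h hg hh =>
    obtain ⟨⟨a, rfl⟩, b, rfl⟩ := And.intro hg hh
    exact ⟨a * b, map_mul _ a b⟩

theorem toCoprod_gen_pow (i : ι) : toCoprod n (gen n i ^ n i) = 1 := by
  rw [map_pow, toCoprod_gen, ← map_pow, multiplicative_zmod_pow_eq_one, map_one]

theorem ker_toCoprod (i : ι) : (toCoprod n).ker = Subgroup.zpowers (gen n i ^ n i) := by
  set Z := Subgroup.zpowers (gen n i ^ n i)
  have hZ : Z.Normal := ⟨fun g hg c => by
    rwa [Subgroup.mem_center_iff.mp (Subgroup.zpowers_le.mpr (gen_pow_mem_center i) hg) c,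
      mul_inv_cancel_right]⟩
  have h_pow : ∀ j, QuotientGroup.mk' Z (gen n j) ^ n j = 1 := fun j => by
    rw [← map_pow, gen_pow_eq_gen_pow j i, ← MonoidHom.mem_ker, QuotientGroup.ker_mk']
    exact Subgroup.mem_zpowers _
  choose f hf using fun j => exists_monoidHom_multiplicative_zmod (h_pow j)
  have h_comp : (CoprodI.lift (M := Factor n) f).comp (toCoprod n) = QuotientGroup.mk' Z :=
    hom_ext fun j => by rw [MonoidHom.comp_apply, toCoprod_gen, CoprodI.lift_of, hf]
  refine le_antisymm ?_ (Subgroup.zpowers_le.mpr (toCoprod_gen_pow i))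
  rw [← QuotientGroup.ker_mk' Z, ← h_comp, ← MonoidHom.comap_ker]
  exact MonoidHom.ker_le_comap _ _

theorem exists_eq_mul_gen_pow_zpow (i : ι) {a b : CyclicAmalgam n}
    (h : toCoprod n a = toCoprod n b) : ∃ r : ℤ, a = b * (gen n i ^ n i) ^ r := by
  obtain ⟨r, hr⟩ : b⁻¹ * a ∈ Subgroup.zpowers (gen n i ^ n i) := by
    rw [← ker_toCoprod, MonoidHom.mem_ker, map_mul, map_inv, h, inv_mul_cancel]
  exact ⟨r, by rw [← inv_mul_eq_iff_eq_mul]; exact hr.symm⟩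

theorem center_eq_zpowers [Nontrivial ι] (hn : ∀ i, 1 < n i) (i : ι) :
    Subgroup.center (CyclicAmalgam n) = Subgroup.zpowers (gen n i ^ n i) := by
  refine le_antisymm (fun g hg => ?_) (Subgroup.zpowers_le.mpr (gen_pow_mem_center i))
  have : ∀ j, Fact (1 < n j) := fun j => ⟨hn j⟩
  have h_center : toCoprod n g ∈ Subgroup.center (CoprodI (Factor n)) := by
    refine Subgroup.mem_center_iff.mpr fun h => ?_
    obtain ⟨b, rfl⟩ := toCoprod_surjective h
    rw [← map_mul, Subgroup.mem_center_iff.mp hg, map_mul]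
  rwa [center_coprodI_eq_bot, Subgroup.mem_bot, ← MonoidHom.mem_ker, ker_toCoprod i]
    at h_center

theorem map_gen_pow_eq_or_eq_inv [Nontrivial ι] (hn : ∀ i, 1 < n i)
    (φ : MulAut (CyclicAmalgam n)) (i : ι) :
    φ (gen n i ^ n i) = gen n i ^ n i ∨ φ (gen n i ^ n i) = (gen n i ^ n i)⁻¹ := by
  have h_map : Subgroup.zpowers (gen n i ^ n i) = Subgroup.zpowers (φ (gen n i ^ n i)) := by
    rw [← MulEquiv.coe_toMonoidHom, ← MonoidHom.map_zpowers, ← center_eq_zpowers hn,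
      Subgroup.characteristic_iff_map_eq.mp inferInstance]
  have h_order := not_isOfFinOrder_gen_pow (fun i => (hn i).ne_bot) i
  exact ((Subgroup.zpowers_eq_zpowers_iff h_order).mp h_map).imp Eq.symm Eq.symm

theorem exists_isConj_mul_gen_pow_zpow (i : ι) {a b : CyclicAmalgam n}
    (h : IsConj (toCoprod n a) (toCoprod n b)) :
    ∃ r : ℤ, IsConj (a * (gen n i ^ n i) ^ r) b := by
  obtain ⟨c, hc⟩ := isConj_iff.mp h
  obtain ⟨c, rfl⟩ := toCoprod_surjective c
  simp only [← map_mul, ← map_inv] at hc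
  obtain ⟨r, hr⟩ := exists_eq_mul_gen_pow_zpow i hc.symm
  refine ⟨r, isConj_iff.mpr ⟨c, ?_⟩⟩
  have h_comm := Subgroup.mem_center_iff.mp
    (Subgroup.zpow_mem _ (gen_pow_mem_center (n := n) i) r) c⁻¹
  rw [hr, ← mul_assoc, mul_assoc _ _ c⁻¹, ← h_comm, ← mul_assoc]

theorem exists_isConj_toCoprod_gen_zpow (hn : Pairwise fun i j => (n i).Coprime (n j))
    (hi : n i ≠ 0) {g : CoprodI (Factor n)} (hg : g ^ n i = 1) :
    ∃ k : ℤ, IsConj (toCoprod n (gen n i ^ k)) g := by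
  have : Nonempty ι := ⟨i⟩
  obtain ⟨j, h, h_conj⟩ := exists_isConj_of_of_isOfFinOrder
    (isOfFinOrder_iff_pow_eq_one.mpr ⟨n i, Nat.pos_of_ne_zero hi, hg⟩)
  obtain rfl | hij := eq_or_ne i j
  · obtain ⟨k, hk⟩ := exists_toCoprod_gen_zpow_eq h
    exact ⟨k, hk ▸ h_conj⟩
  · have h_pow : h ^ n i = 1 := by
      have := h_conj.pow (n i)
      rwa [hg, isConj_one_left, ← map_pow, map_eq_one_iff _ (CoprodI.of_injective j)] at this
    have h_one : h = 1 := (pow_eq_one_iff_of_coprime (hn hij)).mp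
      ⟨h_pow, multiplicative_zmod_pow_eq_one h⟩
    exact ⟨0, by simpa [h_one] using h_conj⟩

theorem isConj_gen_zpow_map_gen (hn : Pairwise fun i j => (n i).Coprime (n j))
    (hn_zero : ∀ i, n i ≠ 0) {f : CyclicAmalgam n →* CyclicAmalgam n} {e : ℤ}
    (hf : f (gen n i ^ n i) = (gen n i ^ n i) ^ e) : IsConj (gen n i ^ e) (f (gen n i)) := by
  have h_pow : toCoprod n (f (gen n i)) ^ n i = 1 := by
    rw [← map_pow, ← map_pow, hf, map_zpow, toCoprod_gen_pow, one_zpow]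
  obtain ⟨k, hk⟩ := exists_isConj_toCoprod_gen_zpow hn (hn_zero i) h_pow
  obtain ⟨r, hr⟩ := exists_isConj_mul_gen_pow_zpow i hk
  have h_merge : gen n i ^ k * (gen n i ^ n i) ^ r = gen n i ^ (k + n i * r) := by
    rw [zpow_add, zpow_mul, zpow_natCast]
  have h_center : IsConj ((gen n i ^ n i) ^ (k + n i * r)) ((gen n i ^ n i) ^ e) := by
    rw [← hf, map_pow, ← zpow_natCast (gen n i), zpow_comm, ← h_merge, zpow_natCast]
    exact hr.pow (n i)
  have h_exp : k + n i * r = e := gen_pow_zpow_injective hn_zero i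
    (h_center.eq_of_left_mem_center (Subgroup.zpow_mem _ (gen_pow_mem_center i) _))
  rwa [← h_exp, ← h_merge]

section Bool

variable {n : Bool → ℕ}

theorem exists_eq_gen_zpow_mul_of_surjective (hn_true : 1 < n true)
    {f : CyclicAmalgam n →* CyclicAmalgam n} (hf : Function.Surjective f)
    {d : CyclicAmalgam n} (hf_false : f (gen n false) = gen n false)
    (hf_true : f (gen n true) = d * gen n true * d⁻¹) :
    ∃ s t : ℤ, d = gen n false ^ s * gen n true ^ t := by
  let F : CoprodI (Factor n) →* CoprodI (Factor n) := CoprodI.lift fun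
    | false => CoprodI.of
    | true => (MulAut.conj (toCoprod n d)).toMonoidHom.comp CoprodI.of
  have hF : F.comp (toCoprod n) = (toCoprod n).comp f := hom_ext fun
    | false => by simp [F, hf_false, toCoprod_gen]
    | true => by simp [F, hf_true, toCoprod_gen]
  have hF_surj : Function.Surjective F := .of_comp (g := toCoprod n) <| by
    rw [← MonoidHom.coe_comp, hF]
    exact toCoprod_surjective.comp hf
  have : Fact (1 < n true) := ⟨hn_true⟩
  obtain ⟨a, b, hab⟩ := exists_eq_of_mul_of_of_surjective hF_surj (c := toCoprod n d)
    (fun h => by simp [F]) (fun h => by simp [F])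
  obtain ⟨s, hs⟩ := exists_toCoprod_gen_zpow_eq a
  obtain ⟨t, ht⟩ := exists_toCoprod_gen_zpow_eq b
  rw [← hs, ← ht, ← map_mul] at hab
  obtain ⟨r, rfl⟩ := exists_eq_mul_gen_pow_zpow true hab
  exact ⟨s, t + n true * r, by rw [zpow_add, zpow_mul, zpow_natCast, mul_assoc]⟩

theorem mem_range_conj_of_map_gen_false (hn : ∀ i, 1 < n i)
    (h_coprime : Pairwise fun i j => (n i).Coprime (n j)) {φ : MulAut (CyclicAmalgam n)}
    (hφ : φ (gen n false) = gen n false) :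
    φ ∈ (MulAut.conj : CyclicAmalgam n →* MulAut (CyclicAmalgam n)).range := by
  have h_pow : φ (gen n true ^ n true) = (gen n true ^ n true) ^ (1 : ℤ) := by
    rw [gen_pow_eq_gen_pow true false, map_pow, hφ, zpow_one]
  obtain ⟨d, hd⟩ := isConj_iff.mp <| isConj_gen_zpow_map_gen h_coprime
    (fun i => (hn i).ne_bot) (f := φ.toMonoidHom) h_pow
  rw [zpow_one] at hd
  obtain ⟨s, t, rfl⟩ := exists_eq_gen_zpow_mul_of_surjective (hn true)
    (f := φ.toMonoidHom) φ.surjective hφ hd.symm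
  have h_cancel : ∀ i (k : ℤ), MulAut.conj (gen n i ^ k) (gen n i) = gen n i := fun _ k =>
    (MulAut.conj_apply _ _).trans ((Commute.refl _).zpow_left k).mul_inv_cancel
  rw [← MulAut.conj_apply, map_mul, MulAut.mul_apply, h_cancel] at hd
  exact ⟨gen n false ^ s, MulEquiv.toMonoidHom_injective (hom_ext fun
    | false => (h_cancel false s).trans hφ.symm
    | true => hd)⟩

theorem mem_range_conj_of_isConj_map_gen_false (hn : ∀ i, 1 < n i)
    (h_coprime : Pairwise fun i j => (n i).Coprime (n j)) {φ : MulAut (CyclicAmalgam n)}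
    (hφ : IsConj (gen n false) (φ (gen n false))) :
    φ ∈ (MulAut.conj : CyclicAmalgam n →* MulAut (CyclicAmalgam n)).range := by
  obtain ⟨c, hc⟩ := isConj_iff.mp hφ
  have h_fix : ((MulAut.conj c)⁻¹ * φ) (gen n false) = gen n false := by
    rw [MulAut.mul_apply, ← hc, ← MulAut.conj_apply, MulAut.inv_apply_self]
  exact (Subgroup.mul_mem_cancel_left _ (inv_mem (MonoidHom.mem_range.mpr ⟨c, rfl⟩))).mp
    (mem_range_conj_of_map_gen_false hn h_coprime h_fix)

theorem mem_range_conj_or_inv_mul_mem_range_conj (hn : ∀ i, 1 < n i)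
    (h_coprime : Pairwise fun i j => (n i).Coprime (n j)) {ε : MulAut (CyclicAmalgam n)}
    (hε : ε (gen n false) = (gen n false)⁻¹) (φ : MulAut (CyclicAmalgam n)) :
    φ ∈ (MulAut.conj : CyclicAmalgam n →* MulAut (CyclicAmalgam n)).range ∨
      ε⁻¹ * φ ∈ (MulAut.conj : CyclicAmalgam n →* MulAut (CyclicAmalgam n)).range := by
  have h_conj : ∀ e : ℤ, φ (gen n false ^ n false) = (gen n false ^ n false) ^ e →
      IsConj (gen n false ^ e) (φ (gen n false)) := fun e =>
    isConj_gen_zpow_map_gen h_coprime (fun i => (hn i).ne_bot) (f := φ.toMonoidHom)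
  refine (map_gen_pow_eq_or_eq_inv hn φ false).imp (fun h => ?_) (fun h => ?_) <;>
    apply mem_range_conj_of_isConj_map_gen_false hn h_coprime
  · simpa only [zpow_one] using h_conj 1 (h.trans (zpow_one _).symm)
  · have h_inv := h_conj (-1) (h.trans (zpow_neg_one _).symm)
    rw [zpow_neg_one, ← hε] at h_inv
    simpa using (ε⁻¹).toMonoidHom.map_isConj h_inv

end Bool

end CyclicAmalgam

theorem mulAut_congr_conj {G H : Type*} [Group G] [Group H] (e : G ≃* H) (g : G) :
    MulAut.congr e (MulAut.conj g) = MulAut.conj (e g) := by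
  ext h
  simp

theorem mulAut_congr_mem_range_conj {G H : Type*} [Group G] [Group H] (e : G ≃* H)
    {φ : MulAut G} :
    MulAut.congr e φ ∈ (MulAut.conj : H →* MulAut H).range ↔
      φ ∈ (MulAut.conj : G →* MulAut G).range := by
  simp only [MonoidHom.mem_range, e.surjective.exists, ← mulAut_congr_conj,
    (MulAut.congr e).injective.eq_iff]

section Braid

variable {G : Type*} [Group G] {k : ℕ}

theorem sq_eq_pow_of_mul_pow_mul_eq {a b : G} (h : (a * b) ^ k * a = (b * a) ^ k * b) :
    ((a * b) ^ k * a) ^ 2 = (a * b) ^ (2 * k + 1) := by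
  calc ((a * b) ^ k * a) ^ 2 = (a * b) ^ k * a * ((b * a) ^ k * b) := by rw [sq, ← h]
    _ = (a * b) ^ k * (a * b) * (a * b) ^ k := by
      rw [mul_pow_mul b a, mul_assoc, ← mul_assoc a, ← mul_assoc]
    _ = (a * b) ^ (2 * k + 1) := by rw [← pow_succ, ← pow_add]; congr 1; omega

theorem mul_pow_mul_eq_of_sq_eq_pow {x y : G} (h : x ^ 2 = y ^ (2 * k + 1)) :
    ((y ^ k)⁻¹ * x * (x⁻¹ * y ^ (k + 1))) ^ k * ((y ^ k)⁻¹ * x) =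
      (x⁻¹ * y ^ (k + 1) * ((y ^ k)⁻¹ * x)) ^ k * (x⁻¹ * y ^ (k + 1)) := by
  have h_prod : (y ^ k)⁻¹ * x * (x⁻¹ * y ^ (k + 1)) = y := by rw [pow_succ]; group
  rw [mul_pow_mul (x⁻¹ * _), h_prod, mul_inv_cancel_left, mul_assoc, ← pow_add,
    eq_inv_mul_iff_mul_eq, ← sq, h]
  congr 1
  omega

theorem inv_mul_inv_pow_mul_inv (a b : G) : (a⁻¹ * b⁻¹) ^ k * a⁻¹ = ((a * b) ^ k * a)⁻¹ := by
  rw [mul_pow_mul, ← mul_inv_rev, inv_pow, mul_inv_rev]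

end Braid

theorem altWord_two_mul_add_one (k : ℕ) (x y : FreeGroup (Fin 2)) :
    altWord (2 * k + 1) x y = (x * y) ^ k * x := by
  induction k with
  | zero => simp [altWord]
  | succ k ih =>
    calc altWord (2 * (k + 1) + 1) x y = x * (y * altWord (2 * k + 1) x y) := rfl
      _ = (x * y) ^ (k + 1) * x := by rw [ih, pow_succ', ← mul_assoc, ← mul_assoc]

/-- The Artin group `⟨α, β | w(α,β:m) = w(β,α:m)⟩`. -/
abbrev DihedralArtinGroup (m : ℕ) : Type :=
  PresentedGroup (dihedralArtinRel m)

namespace DihedralArtinGroup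

/-- The first standard generator. -/
abbrev α {m : ℕ} : DihedralArtinGroup m :=
  PresentedGroup.of 0

/-- The second standard generator. -/
abbrev β {m : ℕ} : DihedralArtinGroup m :=
  PresentedGroup.of 1

theorem hom_ext {m : ℕ} {M : Type*} [Monoid M] {f g : DihedralArtinGroup m →* M}
    (hα : f α = g α) (hβ : f β = g β) : f = g :=
  MonoidHom.eq_of_eqOn_dense (PresentedGroup.closure_range_of _) <| by
    rintro _ ⟨i, rfl⟩
    fin_cases i
    exacts [hα, hβ]

variable {k : ℕ}

theorem braid_relation :
    (α * β : DihedralArtinGroup (2 * k + 1)) ^ k * α = (β * α) ^ k * β := by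
  have h := PresentedGroup.mk_eq_mk_of_mul_inv_mem (rels := dihedralArtinRel (2 * k + 1)) rfl
  rwa [altWord_two_mul_add_one, altWord_two_mul_add_one, map_mul, map_pow, map_mul, map_mul,
    map_pow, map_mul] at h

section Lift

variable {H : Type*} [Group H] {a b : H}

/-- The homomorphism given by the universal property of the presentation, the relation being
written as an identity of powers. -/
def lift (h : (a * b) ^ k * a = (b * a) ^ k * b) : DihedralArtinGroup (2 * k + 1) →* H :=
  PresentedGroup.toGroup (f := ![a, b]) (by
    rintro _ rfl
    simp [altWord_two_mul_add_one, h])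

@[simp]
theorem lift_α (h : (a * b) ^ k * a = (b * a) ^ k * b) : lift h α = a :=
  PresentedGroup.toGroup.of _

@[simp]
theorem lift_β (h : (a * b) ^ k * a = (b * a) ^ k * b) : lift h β = b :=
  PresentedGroup.toGroup.of _

end Lift

/-- The exponents `2` and `2 * k + 1` of the amalgam isomorphic to the Artin group. -/
abbrev exponent (k : ℕ) (i : Bool) : ℕ :=
  cond i (2 * k + 1) 2

theorem one_lt_exponent (hk : k ≠ 0) (i : Bool) : 1 < exponent k i := by
  cases i <;> simp [exponent, Nat.pos_of_ne_zero hk]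

theorem pairwise_coprime_exponent :
    Pairwise fun i j => (exponent k i).Coprime (exponent k j) := by
  rintro (_ | _) (_ | _) h <;> simp [exponent] at h ⊢

/-- The isomorphism sending the Garside element `(αβ)^k α` and the product `αβ` to the generators
of the amalgam. -/
def equivCyclicAmalgam (k : ℕ) : DihedralArtinGroup (2 * k + 1) ≃* CyclicAmalgam (exponent k) :=
  MonoidHom.toMulEquiv
    (lift (mul_pow_mul_eq_of_sq_eq_pow (CyclicAmalgam.gen_pow_eq_gen_pow false true)))
    (CyclicAmalgam.lift (fun i => cond i (α * β) ((α * β) ^ k * α)) (by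
      have := sq_eq_pow_of_mul_pow_mul_eq (braid_relation (k := k))
      rintro (_ | _) (_ | _) <;> simp [exponent, this]))
    (hom_ext (by simp) (by simp [pow_succ, mul_assoc]))
    (CyclicAmalgam.hom_ext (by rintro (_ | _) <;> simp [pow_succ]))

theorem equivCyclicAmalgam_mul_pow_mul (k : ℕ) :
    equivCyclicAmalgam k ((α * β) ^ k * α) = CyclicAmalgam.gen (exponent k) false := by
  simp [equivCyclicAmalgam, pow_succ]

theorem braid_relation_inv :
    (α⁻¹ * β⁻¹ : DihedralArtinGroup (2 * k + 1)) ^ k * α⁻¹ = (β⁻¹ * α⁻¹) ^ k * β⁻¹ := by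
  rw [inv_mul_inv_pow_mul_inv, inv_mul_inv_pow_mul_inv, braid_relation]

/-- The automorphism inverting both generators. -/
def inversion (k : ℕ) : MulAut (DihedralArtinGroup (2 * k + 1)) :=
  have h_comp : (lift braid_relation_inv).comp (lift braid_relation_inv) =
      MonoidHom.id (DihedralArtinGroup (2 * k + 1)) := hom_ext (by simp) (by simp)
  MonoidHom.toMulEquiv _ _ h_comp h_comp

theorem inversion_α (k : ℕ) : inversion k α = α⁻¹ :=
  lift_α (braid_relation_inv (k := k))

theorem inversion_β (k : ℕ) : inversion k β = β⁻¹ :=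
  lift_β (braid_relation_inv (k := k))

theorem inversion_mul_pow_mul (k : ℕ) :
    inversion k ((α * β) ^ k * α) = ((α * β) ^ k * α)⁻¹ := by
  rw [map_mul, map_pow, map_mul, inversion_α, inversion_β, inv_mul_inv_pow_mul_inv]

theorem not_isConj_α_inv : ¬ IsConj (α : DihedralArtinGroup (2 * k + 1)) α⁻¹ := by
  intro h
  have h_deg := (lift (k := k) (a := Multiplicative.ofAdd (1 : ℤ)) rfl).map_isConj h
  rw [isConj_iff_eq, map_inv, lift_α] at h_deg
  exact absurd h_deg (by decide)

theorem inversion_notMem_range_conj (k : ℕ) :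
    inversion k ∉ (MulAut.conj : DihedralArtinGroup (2 * k + 1) →* _).range := by
  rintro ⟨c, hc⟩
  refine not_isConj_α_inv (isConj_iff.mpr ⟨c, ?_⟩)
  rw [← inversion_α, ← hc, MulAut.conj_apply]

theorem mem_range_conj_or_inversion_inv_mul_mem_range_conj (hk : k ≠ 0)
    (φ : MulAut (DihedralArtinGroup (2 * k + 1))) :
    φ ∈ (MulAut.conj : DihedralArtinGroup (2 * k + 1) →* _).range ∨
      (inversion k)⁻¹ * φ ∈ (MulAut.conj : DihedralArtinGroup (2 * k + 1) →* _).range := by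
  let e := equivCyclicAmalgam k
  have h_inversion : MulAut.congr e (inversion k) (CyclicAmalgam.gen (exponent k) false) =
      (CyclicAmalgam.gen (exponent k) false)⁻¹ := by
    rw [← equivCyclicAmalgam_mul_pow_mul, ← map_inv, ← inversion_mul_pow_mul]
    exact congrArg (fun x => e (inversion k x)) (e.symm_apply_apply _)
  rw [← mulAut_congr_mem_range_conj e, ← mulAut_congr_mem_range_conj e, map_mul, map_inv]
  exact CyclicAmalgam.mem_range_conj_or_inv_mul_mem_range_conj (one_lt_exponent hk)
    pairwise_coprime_exponent h_inversion _

end DihedralArtinGroup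

/-- for the rank-2 Artin group `A` with odd label `m ≥ 3`, `Out(A)` is cyclic
of order 2, generated by the class of the automorphism `ε : α ↦ α⁻¹, β ↦ β⁻¹`:
there is such an automorphism `ε`, it is not inner, and every automorphism lies in the
inner class or the class of `ε`. -/
theorem stmt6 (m : ℕ) (hm : 3 ≤ m) (hodd : Odd m) :
    ∃ ε : MulAut (PresentedGroup (dihedralArtinRel m)),
      ε (PresentedGroup.of 0) = (PresentedGroup.of 0)⁻¹ ∧
      ε (PresentedGroup.of 1) = (PresentedGroup.of 1)⁻¹ ∧
      ε ∉ (MulAut.conj : PresentedGroup (dihedralArtinRel m) →*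
            MulAut (PresentedGroup (dihedralArtinRel m))).range ∧
      ∀ φ : MulAut (PresentedGroup (dihedralArtinRel m)),
        φ ∈ (MulAut.conj : PresentedGroup (dihedralArtinRel m) →*
              MulAut (PresentedGroup (dihedralArtinRel m))).range ∨
        ε⁻¹ * φ ∈ (MulAut.conj : PresentedGroup (dihedralArtinRel m) →*
              MulAut (PresentedGroup (dihedralArtinRel m))).range := by
  obtain ⟨k, rfl⟩ := hodd
  exact ⟨DihedralArtinGroup.inversion k, DihedralArtinGroup.inversion_α k,
    DihedralArtinGroup.inversion_β k, DihedralArtinGroup.inversion_notMem_range_conj k,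
    DihedralArtinGroup.mem_range_conj_or_inversion_inv_mul_mem_range_conj (by omega)⟩
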